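/- Let $p\in(1,\infty)$, $\theta\in\mathbb{R}$, and $u\in C_c^\infty(\mathbb{R}^d_+)$. Then $\frac{\theta^2}{p^2}\int_{\mathbb{R}^d_+} |u|^p x_d^{\theta-1}\,dx \leq \int_{\mathbb{R}^d_+} |u|^{p-2}(D_d u)^2 x_d^{\theta+1}\,dx$. -/

import Mathlib

open MeasureTheory

namespace HardyAux

variable {n : ℕ}

lemma hasFDerivAt_weight (a : ℝ) {x : Fin (n + 1) → ℝ} (hx : 0 < x (Fin.last n)) :
    HasFDerivAt (fun y : Fin (n + 1) → ℝ => y (Fin.last n) ^ a)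
      ((a * x (Fin.last n) ^ (a - 1)) •
        (ContinuousLinearMap.proj (R := ℝ) (φ := fun _ : Fin (n + 1) => ℝ) (Fin.last n))) x := by
  have h1 : HasFDerivAt (fun y : Fin (n + 1) → ℝ => y (Fin.last n))
      (ContinuousLinearMap.proj (R := ℝ) (φ := fun _ : Fin (n + 1) => ℝ) (Fin.last n)) x :=
    hasFDerivAt_apply _ _
  exact (Real.hasDerivAt_rpow_const (Or.inl hx.ne')).comp_hasFDerivAt x h1

lemma contDiff_mul_weight {v : (Fin (n + 1) → ℝ) → ℝ} {k : WithTop ℕ∞}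
    (hv : ContDiff ℝ k v)
    (hpos : tsupport v ⊆ {x : Fin (n + 1) → ℝ | 0 < x (Fin.last n)}) (a : ℝ) :
    ContDiff ℝ k (fun x => v x * x (Fin.last n) ^ a) := by
  rw [contDiff_iff_contDiffAt]
  intro x
  by_cases hx : x ∈ tsupport v
  · refine hv.contDiffAt.mul ?_
    refine ContDiffAt.rpow_const_of_ne ?_ (hpos hx).ne'
    exact (contDiff_apply ℝ ℝ (Fin.last n)).contDiffAt
  · have h0 : v =ᶠ[nhds x] 0 := notMem_tsupport_iff_eventuallyEq.1 hx
    have : (fun x => v x * x (Fin.last n) ^ a) =ᶠ[nhds x] fun _ => 0 := by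
      filter_upwards [h0] with y hy
      simp [hy]
    exact contDiffAt_const.congr_of_eventuallyEq this

lemma integral_fderiv_eq_zero {F : (Fin (n + 1) → ℝ) → ℝ} (hF : ContDiff ℝ 1 F)
    (hc : HasCompactSupport F) (e : Fin (n + 1) → ℝ) :
    Integrable (fun x => fderiv ℝ F x e) ∧ ∫ x, fderiv ℝ F x e = 0 := by
  have hi : Integrable (fun x => fderiv ℝ F x e) :=
    ((hF.continuous_fderiv one_ne_zero).clm_apply continuous_const).integrable_of_hasCompactSupport
      (hc.fderiv_apply ℝ e)
  refine ⟨hi, ?_⟩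
  have := integral_mul_fderiv_eq_neg_fderiv_mul_of_integrable (μ := volume)
    (f := fun _ : Fin (n + 1) → ℝ => (1 : ℝ)) (g := F) (v := e)
    (by simp) (by simpa using hi)
    (by simpa using hF.continuous.integrable_of_hasCompactSupport hc)
    (fun x _ => differentiableAt_const _) (fun x _ => hF.differentiable one_ne_zero x)
  simpa using this

/-- Derivative of the regularised power. -/
lemma hasDerivAt_reg (p ε : ℝ) (hε : 0 < ε) (s : ℝ) :
    HasDerivAt (fun s : ℝ => s * (s ^ 2 + ε) ^ ((p - 2) / 2))
      ((s ^ 2 + ε) ^ ((p - 2) / 2) + s * (2 * s * ((p - 2) / 2) * (s ^ 2 + ε) ^ ((p - 2) / 2 - 1)))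
      s := by
  have h1 : HasDerivAt (fun s : ℝ => s ^ 2 + ε) (2 * s) s := by
    simpa using (hasDerivAt_pow 2 s).add_const ε
  have h2 := h1.rpow_const (p := (p - 2) / 2) (Or.inl (by positivity : s ^ 2 + ε ≠ 0))
  have h3 := (hasDerivAt_id s).mul h2
  simp only [id, one_mul] at h3
  exact h3

lemma reg_deriv_ge (p ε : ℝ) (hp2 : p < 2) (hε : 0 < ε) (s : ℝ) :
    (p - 1) * (s ^ 2 + ε) ^ ((p - 2) / 2) ≤
      (s ^ 2 + ε) ^ ((p - 2) / 2) +
        s * (2 * s * ((p - 2) / 2) * (s ^ 2 + ε) ^ ((p - 2) / 2 - 1)) := by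
  have h : 0 < s ^ 2 + ε := by positivity
  have h3 : (s ^ 2 + ε) ^ ((p - 2) / 2) = (s ^ 2 + ε) ^ ((p - 2) / 2 - 1) * (s ^ 2 + ε) := by
    rw [Real.rpow_sub_one h.ne']; field_simp
  have h4 : 0 < (s ^ 2 + ε) ^ ((p - 2) / 2 - 1) := Real.rpow_pos_of_pos h _
  rw [h3]
  generalize (s ^ 2 + ε) ^ ((p - 2) / 2 - 1) = q at *
  have : 0 ≤ q * ((2 - p) * ε) := by
    have : 0 ≤ 2 - p := by linarith
    positivity
  nlinarith

lemma reg_le (p ε M : ℝ) (hp : 1 < p) (hε : 0 < ε) (hε1 : ε ≤ 1) (s : ℝ) (hs : |s| ≤ M) :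
    |s * (s ^ 2 + ε) ^ ((p - 2) / 2)| ≤ (M ^ 2 + 1) ^ ((p - 1) / 2) := by
  have h : 0 < s ^ 2 + ε := by positivity
  rw [abs_mul, abs_of_pos (Real.rpow_pos_of_pos h _)]
  have h1 : |s| ≤ (s ^ 2 + ε) ^ (1 / 2 : ℝ) := by
    rw [← Real.sqrt_eq_rpow]
    exact Real.abs_le_sqrt (by linarith)
  calc |s| * (s ^ 2 + ε) ^ ((p - 2) / 2)
      ≤ (s ^ 2 + ε) ^ (1 / 2 : ℝ) * (s ^ 2 + ε) ^ ((p - 2) / 2) := by gcongr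
    _ = (s ^ 2 + ε) ^ ((p - 1) / 2) := by
        rw [← Real.rpow_add h]; congr 1; ring
    _ ≤ (M ^ 2 + 1) ^ ((p - 1) / 2) := by
        apply Real.rpow_le_rpow h.le _ (by linarith)
        have : s ^ 2 ≤ M ^ 2 := sq_le_sq' (by linarith [neg_abs_le s]) (by linarith [le_abs_self s])
        linarith

lemma reg_bound (p : ℝ) (hp : 1 < p) (hp2 : p < 2)
    {u K : (Fin (n + 1) → ℝ) → ℝ} (e : Fin (n + 1) → ℝ)
    (hu : ContDiff ℝ 1 u) (hK : ContDiff ℝ 1 K) (hKc : HasCompactSupport K)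
    (hK0 : ∀ x, 0 ≤ fderiv ℝ u x e * K x) (M : ℝ) (hM : ∀ x, |u x| ≤ M)
    (ε : ℝ) (hε : 0 < ε) (hε1 : ε ≤ 1) :
    Integrable (fun x => (u x ^ 2 + ε) ^ ((p - 2) / 2) * (fderiv ℝ u x e * K x)) ∧
    ∫ x, (u x ^ 2 + ε) ^ ((p - 2) / 2) * (fderiv ℝ u x e * K x) ≤
      (p - 1)⁻¹ * ((M ^ 2 + 1) ^ ((p - 1) / 2) * ∫ x, |fderiv ℝ K x e|) := by
  have hpe : ∀ x, u x ^ 2 + ε ≠ 0 := fun x => by positivity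
  have hr : ContDiff ℝ 1 (fun x => (u x ^ 2 + ε) ^ ((p - 2) / 2)) :=
    ((hu.pow 2).add contDiff_const).rpow_const_of_ne hpe
  have hud : Continuous (fun x => fderiv ℝ u x e) :=
    (hu.continuous_fderiv one_ne_zero).clm_apply continuous_const
  have hint : Integrable (fun x => (u x ^ 2 + ε) ^ ((p - 2) / 2) * (fderiv ℝ u x e * K x)) := by
    refine (hr.continuous.mul (hud.mul hK.continuous)).integrable_of_hasCompactSupport ?_
    exact (hKc.mul_left).mul_left
  refine ⟨hint, ?_⟩
  set h : (Fin (n + 1) → ℝ) → ℝ := fun x => u x * (u x ^ 2 + ε) ^ ((p - 2) / 2) with hh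
  have hhc : ContDiff ℝ 1 h := hu.mul hr
  have hG : ContDiff ℝ 1 (fun x => h x * K x) := hhc.mul hK
  obtain ⟨hGi, hG0⟩ := integral_fderiv_eq_zero hG hKc.mul_left e
  obtain ⟨hKi, -⟩ := integral_fderiv_eq_zero hK hKc e
  have hder : ∀ x, fderiv ℝ (fun x => h x * K x) x e = h x * fderiv ℝ K x e +
      ((u x ^ 2 + ε) ^ ((p - 2) / 2) + u x * (2 * u x * ((p - 2) / 2) *
        (u x ^ 2 + ε) ^ ((p - 2) / 2 - 1))) * (fderiv ℝ u x e * K x) := by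
    intro x
    have h1 : HasFDerivAt h _ x := (hasDerivAt_reg p ε hε (u x)).comp_hasFDerivAt x
      (hu.differentiable one_ne_zero x).hasFDerivAt
    have h2 := h1.mul (hK.differentiable one_ne_zero x).hasFDerivAt
    have h3 : fderiv ℝ (fun x => h x * K x) x = _ := h2.fderiv
    rw [h3]
    simp only [add_apply, smul_apply, smul_eq_mul]
    ring
  have key : ∀ x, (p - 1) * ((u x ^ 2 + ε) ^ ((p - 2) / 2) * (fderiv ℝ u x e * K x)) ≤
      fderiv ℝ (fun x => h x * K x) x e + (M ^ 2 + 1) ^ ((p - 1) / 2) * |fderiv ℝ K x e| := by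
    intro x
    rw [hder]
    have h1 := mul_le_mul_of_nonneg_right (reg_deriv_ge p ε hp2 hε (u x)) (hK0 x)
    have h2 : -(h x * fderiv ℝ K x e) ≤ (M ^ 2 + 1) ^ ((p - 1) / 2) * |fderiv ℝ K x e| := by
      refine (neg_le_abs _).trans ?_
      rw [abs_mul]
      exact mul_le_mul_of_nonneg_right (reg_le p ε M hp hε hε1 (u x) (hM x)) (abs_nonneg _)
    linarith
  have hI := integral_mono (hint.const_mul (p - 1)) (hGi.add (hKi.abs.const_mul _)) key
  have hs : ∫ x, (fderiv ℝ (fun x => h x * K x) x e +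
      (M ^ 2 + 1) ^ ((p - 1) / 2) * |fderiv ℝ K x e|) =
      (M ^ 2 + 1) ^ ((p - 1) / 2) * ∫ x, |fderiv ℝ K x e| := by
    rw [integral_add hGi (hKi.abs.const_mul _), hG0, integral_const_mul, zero_add]
  have hI' : (p - 1) * ∫ x, (u x ^ 2 + ε) ^ ((p - 2) / 2) * (fderiv ℝ u x e * K x) ≤
      (M ^ 2 + 1) ^ ((p - 1) / 2) * ∫ x, |fderiv ℝ K x e| := by
    rw [← hs, ← integral_const_mul]
    exact hI
  rw [inv_mul_eq_div, le_div_iff₀ (by linarith)]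
  linarith

lemma integrable_sing (p : ℝ) (hp : 1 < p)
    {u K : (Fin (n + 1) → ℝ) → ℝ} (e : Fin (n + 1) → ℝ)
    (hu : ContDiff ℝ 1 u) (hK : ContDiff ℝ 1 K) (hKc : HasCompactSupport K)
    (hK0 : ∀ x, 0 ≤ fderiv ℝ u x e * K x) (M : ℝ) (hM : ∀ x, |u x| ≤ M) :
    Integrable (fun x => |u x| ^ (p - 2) * (fderiv ℝ u x e * K x)) := by
  have hud : Continuous (fun x => fderiv ℝ u x e) :=
    (hu.continuous_fderiv one_ne_zero).clm_apply continuous_const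
  rcases le_or_gt 2 p with hp2 | hp2
  · refine Continuous.integrable_of_hasCompactSupport ?_ (hKc.mul_left).mul_left
    exact (hu.continuous.abs.rpow_const (fun x => Or.inr (by linarith))).mul
      (hud.mul hK.continuous)
  have hmeas : Measurable (fun x => |u x| ^ (p - 2) * (fderiv ℝ u x e * K x)) :=
    (hu.continuous.abs.measurable.pow_const _).mul (hud.mul hK.continuous).measurable
  have hnn : ∀ x, 0 ≤ |u x| ^ (p - 2) * (fderiv ℝ u x e * K x) := fun x =>
    mul_nonneg (Real.rpow_nonneg (abs_nonneg _) _) (hK0 x)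
  refine ⟨hmeas.aestronglyMeasurable, ?_⟩
  rw [hasFiniteIntegral_iff_ofReal (Filter.Eventually.of_forall hnn)]
  set ε : ℕ → ℝ := fun k => 1 / ((k : ℝ) + 1) with hεdef
  have hε : ∀ k, 0 < ε k := fun k => by positivity
  have hε1 : ∀ k, ε k ≤ 1 := fun k => by
    rw [hεdef]; simp only
    rw [div_le_one (by positivity)]
    have : (0 : ℝ) ≤ k := Nat.cast_nonneg k
    linarith
  have hεt : Filter.Tendsto ε Filter.atTop (nhds 0) := tendsto_one_div_add_atTop_nhds_zero_nat
  set f : ℕ → (Fin (n + 1) → ℝ) → ℝ :=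
    fun k x => (u x ^ 2 + ε k) ^ ((p - 2) / 2) * (fderiv ℝ u x e * K x) with hf
  have hb := fun k => reg_bound p hp hp2 e hu hK hKc hK0 M hM (ε k) (hε k) (hε1 k)
  set C := (p - 1)⁻¹ * ((M ^ 2 + 1) ^ ((p - 1) / 2) * ∫ x, |fderiv ℝ K x e|)
  have hfm : ∀ k, AEMeasurable (fun x => ENNReal.ofReal (f k x)) volume := fun k =>
    (hb k).1.aestronglyMeasurable.aemeasurable.ennreal_ofReal
  have hpt : ∀ x, ENNReal.ofReal (|u x| ^ (p - 2) * (fderiv ℝ u x e * K x)) ≤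
      Filter.liminf (fun k => ENNReal.ofReal (f k x)) Filter.atTop := by
    intro x
    by_cases hx : u x = 0
    · rw [hx, abs_zero, Real.zero_rpow (by linarith)]
      simp
    · have hlim : Filter.Tendsto (fun k => f k x) Filter.atTop
          (nhds ((u x ^ 2 + 0) ^ ((p - 2) / 2) * (fderiv ℝ u x e * K x))) := by
        refine Filter.Tendsto.mul_const _ ?_
        refine Filter.Tendsto.rpow_const (tendsto_const_nhds.add hεt) (Or.inl ?_)
        positivity
      have he : (u x ^ 2 + 0) ^ ((p - 2) / 2) = |u x| ^ (p - 2) := by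
        rw [add_zero, ← sq_abs, ← Real.rpow_natCast, ← Real.rpow_mul (abs_nonneg _)]
        congr 1
        push_cast
        ring
      rw [he] at hlim
      rw [((ENNReal.continuous_ofReal.tendsto _).comp hlim).liminf_eq.symm]
      rfl
  calc ∫⁻ x, ENNReal.ofReal (|u x| ^ (p - 2) * (fderiv ℝ u x e * K x))
      ≤ ∫⁻ x, Filter.liminf (fun k => ENNReal.ofReal (f k x)) Filter.atTop := lintegral_mono hpt
    _ ≤ Filter.liminf (fun k => ∫⁻ x, ENNReal.ofReal (f k x)) Filter.atTop :=
        lintegral_liminf_le' hfm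
    _ ≤ ENNReal.ofReal C := by
        refine Filter.liminf_le_of_frequently_le' (Filter.Eventually.of_forall fun k => ?_).frequently
        rw [← ofReal_integral_eq_lintegral_ofReal (hb k).1 (Filter.Eventually.of_forall fun x => ?_)]
        · exact ENNReal.ofReal_le_ofReal (hb k).2
        · have := hε k
          exact mul_nonneg (Real.rpow_nonneg (by positivity) _) (hK0 x)
    _ < ⊤ := ENNReal.ofReal_lt_top

end HardyAux

/-- Weighted Hardy inequality in the last variable for smooth compactly
supported functions on the upper half space. -/
theorem stmt0 (n : ℕ) (p θ : ℝ) (hp : 1 < p)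
    (u : (Fin (n + 1) → ℝ) → ℝ)
    (hu : ContDiff ℝ (⊤ : ℕ∞) u) (hsupp : HasCompactSupport u)
    (hpos : tsupport u ⊆ {x : Fin (n + 1) → ℝ | 0 < x (Fin.last n)}) :
    θ ^ 2 / p ^ 2 *
        ∫ x in {x : Fin (n + 1) → ℝ | 0 < x (Fin.last n)},
          |u x| ^ p * x (Fin.last n) ^ (θ - 1) ≤
      ∫ x in {x : Fin (n + 1) → ℝ | 0 < x (Fin.last n)},
        |u x| ^ (p - 2) * (fderiv ℝ u x (Pi.single (Fin.last n) 1)) ^ 2 *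
          x (Fin.last n) ^ (θ + 1) := by

  classical
  set L := Fin.last n with hL
  set e : Fin (n + 1) → ℝ := Pi.single L 1 with he
  have hu1 : ContDiff ℝ 1 u := hu.of_le (by exact_mod_cast le_top)
  have hu2 : ContDiff ℝ 2 u := contDiff_infty.1 hu 2
  have hout : ∀ x, ¬ 0 < x L → x ∉ tsupport u := fun x hx h => hx (hpos h)
  have hout0 : ∀ x, ¬ 0 < x L → u x = 0 := fun x hx => image_eq_zero_of_notMem_tsupport (hout x hx)
  have hsd : tsupport (fun x => fderiv ℝ u x e) ⊆ tsupport u := tsupport_fderiv_apply_subset ℝ e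
  have hout1 : ∀ x, ¬ 0 < x L → fderiv ℝ u x e = 0 := fun x hx =>
    image_eq_zero_of_notMem_tsupport (f := fun x => fderiv ℝ u x e) (fun h => hout x hx (hsd h))
  have hp0 : p ≠ 0 := by linarith
  -- bound on u
  obtain ⟨M, hM⟩ := hsupp.exists_bound_of_continuous hu.continuous
  -- integrability of the right side
  have hd1 : ContDiff ℝ 1 (fun x => fderiv ℝ u x e) :=
    (hu2.fderiv_right (m := 1) (by norm_num)).clm_apply contDiff_const
  have hB : Integrable (fun x => |u x| ^ (p - 2) * (fderiv ℝ u x e) ^ 2 * x L ^ (θ + 1)) := by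
    have h := HardyAux.integrable_sing p hp (u := u)
      (K := fun x => fderiv ℝ u x e * x L ^ (θ + 1)) e hu1
      (HardyAux.contDiff_mul_weight hd1 (hsd.trans hpos) _)
      ((hsupp.fderiv_apply ℝ e).mul_right) (fun x => by
        by_cases hx : 0 < x L
        · have : fderiv ℝ u x e * (fderiv ℝ u x e * x L ^ (θ + 1)) =
            (fderiv ℝ u x e) ^ 2 * x L ^ (θ + 1) := by ring
          rw [this]
          exact mul_nonneg (sq_nonneg _) (Real.rpow_nonneg hx.le _)
        · simp [hout1 x hx]) M (fun x => hM x)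
    refine h.congr (Filter.Eventually.of_forall fun x => ?_)
    simp only
    ring
  have hvC : ContDiff ℝ 1 (fun x => |u x| ^ p) := hu1.norm_rpow hp
  have hvs : HasCompactSupport (fun x => |u x| ^ p) :=
    hsupp.comp_left (g := fun s : ℝ => |s| ^ p) (by simp [hp0])
  have hvt : tsupport (fun x => |u x| ^ p) ⊆ {x : Fin (n + 1) → ℝ | 0 < x L} := by
    refine (closure_mono ?_).trans hpos
    intro x hx h
    exact hx (by simp [h, hp0])
  have hA : Integrable (fun x => |u x| ^ p * x L ^ (θ - 1)) :=
    (HardyAux.contDiff_mul_weight hvC hvt _).continuous.integrable_of_hasCompactSupport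
      hvs.mul_right
  obtain ⟨hFi, hF0⟩ := HardyAux.integral_fderiv_eq_zero
    (HardyAux.contDiff_mul_weight hvC hvt θ) hvs.mul_right e
  have hder : ∀ x, 0 < x L → fderiv ℝ (fun x => |u x| ^ p * x L ^ θ) x e =
      p * |u x| ^ (p - 2) * u x * fderiv ℝ u x e * x L ^ θ + θ * (|u x| ^ p * x L ^ (θ - 1)) := by
    intro x hx
    have h1 : HasFDerivAt (fun x => |u x| ^ p) _ x := (hasDerivAt_abs_rpow (u x) hp).comp_hasFDerivAt x
      (hu1.differentiable one_ne_zero x).hasFDerivAt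
    have h2 := h1.mul (HardyAux.hasFDerivAt_weight θ hx)
    have h3 : fderiv ℝ (fun x => |u x| ^ p * x L ^ θ) x = _ := h2.fderiv
    rw [h3]
    simp only [add_apply, smul_apply, smul_eq_mul,
      ContinuousLinearMap.proj_apply, he, hL, Pi.single_eq_same]
    ring
  have hFout : ∀ x, ¬ 0 < x L → fderiv ℝ (fun x => |u x| ^ p * x L ^ θ) x e = 0 := by
    intro x hx
    have : (fun x => |u x| ^ p * x L ^ θ) =ᶠ[nhds x] fun _ => 0 := by
      filter_upwards [notMem_tsupport_iff_eventuallyEq.1 (hout x hx)] with y hy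
      simp [hy, hp0]
    rw [this.fderiv_eq]
    simp
  rw [setIntegral_eq_integral_of_forall_compl_eq_zero (fun x hx => by
      simp [hout0 x hx, hp0]),
    setIntegral_eq_integral_of_forall_compl_eq_zero (fun x hx => by
      rw [hout1 x hx]; simp)]
  have key : ∀ x, θ ^ 2 / p ^ 2 * (|u x| ^ p * x L ^ (θ - 1)) -
      (2 * θ / p ^ 2) * fderiv ℝ (fun x => |u x| ^ p * x L ^ θ) x e * 1 ≤
      |u x| ^ (p - 2) * (fderiv ℝ u x e) ^ 2 * x L ^ (θ + 1) := by
    intro x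
    by_cases hx : 0 < x L
    · rw [hder x hx]
      have e1 : x L ^ θ = x L ^ (θ - 1) * x L := by
        rw [Real.rpow_sub_one hx.ne']; field_simp
      have e2 : x L ^ (θ + 1) = x L ^ (θ - 1) * x L ^ 2 := by
        rw [Real.rpow_add_one hx.ne', e1]; ring
      have e3 : |u x| ^ p = |u x| ^ (p - 2) * (u x) ^ 2 := by
        by_cases h0 : u x = 0
        · simp [h0, hp0]
        · rw [← sq_abs (u x), ← Real.rpow_natCast, ← Real.rpow_add (abs_pos.2 h0)]
          congr 1
          push_cast
          ring
      rw [e1, e2, e3]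
      have hn : 0 ≤ |u x| ^ (p - 2) * x L ^ (θ - 1) *
          (θ / p * u x + fderiv ℝ u x e * x L) ^ 2 := by
        have := Real.rpow_nonneg (abs_nonneg (u x)) (p - 2)
        have := Real.rpow_nonneg hx.le (θ - 1)
        positivity
      rw [← sub_nonneg]
      convert hn using 1
      field_simp
      ring
    · rw [hFout x hx, hout0 x hx, hout1 x hx]
      simp [hp0]
  have hI := integral_mono ((hA.const_mul (θ ^ 2 / p ^ 2)).sub
    ((hFi.const_mul (2 * θ / p ^ 2)).mul_const 1)) hB key
  have hs : ∫ x, (θ ^ 2 / p ^ 2 * (|u x| ^ p * x L ^ (θ - 1)) -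
      (2 * θ / p ^ 2) * fderiv ℝ (fun x => |u x| ^ p * x L ^ θ) x e * 1) =
      θ ^ 2 / p ^ 2 * ∫ x, |u x| ^ p * x L ^ (θ - 1) := by
    rw [integral_sub (hA.const_mul _) ((hFi.const_mul _).mul_const 1), integral_const_mul,
      integral_mul_const, integral_const_mul, hF0]
    simp
  rw [← hs]
  exact hI
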